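/- Let d ≥ 2 and let 𝒮 be a weighted step set satisfying the standing assumptions, and for 1 ≤ k ≤ d−1 set b_k = Σ_{i∈𝒮, i_k=1} w_i. If the drift is positive, i.e. B(1) > A(1), then there is a constant c > 0 such that for all n ≥ 1, | s_n · S(1)^{−n} · n^{(d−1)/2} − (1 − A(1)/B(1)) · (S(1)/π)^{(d−1)/2} · (b_1 b_2 ⋯ b_{d−1})^{−1/2} | ≤ c/n. Equivalently, s_n = S(1)^n n^{−(d−1)/2} [ (1 − A(1)/B(1)) (S(1)/π)^{(d−1)/2} (b_1 ⋯ b_{d−1})^{−1/2} + O(1/n) ]. -/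

import Mathlib

open Finset

/-- The weighted number of walks of length `n` with steps in `S` (weights `w`),
beginning at the origin and confined to the non-negative orthant. -/
noncomputable def weightedWalkCount (d : ℕ) (S : Finset (Fin d → ℤ))
    (w : (Fin d → ℤ) → ℝ) (n : ℕ) : ℝ :=
  ∑ u : Fin n → S,
    if (∀ k : Fin n, ∀ m : Fin d, 0 ≤ ∑ j ∈ Finset.Iic k, (u j : Fin d → ℤ) m)
    then ∏ k : Fin n, w (u k) else 0

/-!
Normalise the weights to a probability distribution. Given the path of the drift coordinate and the
numbers `N j` of moves along the other axes `j`, the symmetry of the weights makes the other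
coordinates independent simple random walks, so `s_n / S(1) ^ n` is the expectation of
`∏ j, h (N j)` over the event that the drift coordinate survives, `h m` being the probability that a
simple random walk from `0` is non-negative up to time `m`. Reflection evaluates `h` as a central
binomial probability and Wallis' product gives `√(π m / 2) h m = 1 + O(1 / m)`.

The product is then linearised at the means `n q j` of the `N j`. On the survival event, whose
probability converges geometrically to `1 - A(1) / B(1)` by comparison with the harmonic function
`(A(1) / B(1)) ^ (x + 1)`, the deviations `N j - n q j` have bounded first moments and second
moments `O(n)`; an exponential moment discards the counts `N j < n q j / 2`.
-/

open Asymptotics Filter Real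

/-! ### Survival of the simple random walk -/

theorem sq_centralBinom_div_mul_wallis (k : ℕ) :
    (k.centralBinom / 4 ^ k : ℝ) ^ 2 * ((2 * k + 1) * Wallis.W k) = 1 := by
  have hfact : (k.centralBinom : ℝ) = (2 * k).factorial / (k.factorial * k.factorial) := by
    rw [Nat.centralBinom_eq_two_mul_choose, Nat.cast_choose ℝ (by omega), two_mul,
      Nat.add_sub_cancel]
  have hpow : (2 : ℝ) ^ (4 * k) = (4 ^ k) ^ 2 := by
    rw [pow_mul, pow_right_comm 4]
    norm_num
  rw [hfact, Wallis.W_eq_factorial_ratio, hpow]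
  field_simp

theorem pi_mul_sq_centralBinom_div_le (k : ℕ) :
    π * k * (k.centralBinom / 4 ^ k : ℝ) ^ 2 ≤ 1 := by
  have hWallis : π * k ≤ (2 * k + 1) * Wallis.W k := calc
    π * k ≤ (2 * k + 1) * ((2 * k + 1) / (2 * k + 2) * (π / 2)) := by
      rw [← sub_nonneg]
      have : (2 * k + 1) * ((2 * k + 1) / (2 * k + 2) * (π / 2)) - π * k =
          π / (2 * (2 * k + 2)) := by field_simp; ring
      rw [this]; positivity
    _ ≤ (2 * k + 1) * Wallis.W k := by gcongr; exact Wallis.le_W k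
  rw [← sq_centralBinom_div_mul_wallis k, mul_comm]
  gcongr

theorem one_le_pi_mul_sq_centralBinom_div (k : ℕ) :
    1 ≤ π * (k + 1 / 2) * (k.centralBinom / 4 ^ k : ℝ) ^ 2 := by
  have hWallis : (2 * k + 1) * Wallis.W k ≤ π * (k + 1 / 2) := calc
    (2 * k + 1) * Wallis.W k ≤ (2 * k + 1) * (π / 2) := by gcongr; exact Wallis.W_le k
    _ = π * (k + 1 / 2) := by ring
  calc 1 = (2 * k + 1) * Wallis.W k * (k.centralBinom / 4 ^ k : ℝ) ^ 2 := by
        rw [mul_comm, sq_centralBinom_div_mul_wallis]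
    _ ≤ π * (k + 1 / 2) * (k.centralBinom / 4 ^ k : ℝ) ^ 2 := by gcongr

/-- The probability that a simple symmetric random walk on `ℤ` started at `x` is non-negative at
all times `0, …, m`. -/
noncomputable def simpleWalkSurvival : ℕ → ℤ → ℝ
  | 0, x => if 0 ≤ x then 1 else 0
  | m + 1, x => if 0 ≤ x then (simpleWalkSurvival m (x + 1) + simpleWalkSurvival m (x - 1)) / 2
      else 0

theorem simpleWalkSurvival_of_neg (m : ℕ) {x : ℤ} (hx : x < 0) : simpleWalkSurvival m x = 0 := by
  cases m <;> simp [simpleWalkSurvival, hx.not_ge]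

theorem simpleWalkSurvival_zero_of_nonneg {x : ℤ} (hx : 0 ≤ x) : simpleWalkSurvival 0 x = 1 :=
  if_pos hx

theorem simpleWalkSurvival_succ_of_nonneg (m : ℕ) {x : ℤ} (hx : 0 ≤ x) :
    simpleWalkSurvival (m + 1) x =
      (simpleWalkSurvival m (x + 1) + simpleWalkSurvival m (x - 1)) / 2 :=
  if_pos hx

theorem simpleWalkSurvival_mem_Icc (m : ℕ) (x : ℤ) :
    simpleWalkSurvival m x ∈ Set.Icc (0 : ℝ) 1 := by
  induction m generalizing x with
  | zero => rw [simpleWalkSurvival]; split_ifs <;> norm_num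
  | succ m ih =>
    rw [simpleWalkSurvival]
    split_ifs
    · have hup := ih (x + 1)
      have hdown := ih (x - 1)
      constructor <;> linarith [hup.1, hup.2, hdown.1, hdown.2]
    · norm_num

theorem simpleWalkSurvival_add_natAbs (m : ℕ) {x a : ℤ} (hx : 0 ≤ x)
    (ha : a = -1 ∨ a = 0 ∨ a = 1) :
    simpleWalkSurvival (m + a.natAbs) x =
      (simpleWalkSurvival m (x + a) + simpleWalkSurvival m (x - a)) / 2 := by
  rcases ha with rfl | rfl | rfl
  · rw [Int.natAbs_neg, Int.natAbs_one, simpleWalkSurvival_succ_of_nonneg m hx, sub_neg_eq_add,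
      ← sub_eq_add_neg, add_comm]
  · simp
  · rw [Int.natAbs_one, simpleWalkSurvival_succ_of_nonneg m hx]

theorem choose_succ_half_add (m j : ℕ) :
    (m + 1).choose ((m + 1 + (j + 1) + 1) / 2) =
      m.choose ((m + j + 1) / 2) + m.choose ((m + (j + 1 + 1) + 1) / 2) := by
  rw [show (m + 1 + (j + 1) + 1) / 2 = (m + j + 1) / 2 + 1 by omega,
    show (m + (j + 1 + 1) + 1) / 2 = (m + j + 1) / 2 + 1 by omega, Nat.choose_succ_succ']

theorem choose_succ_half (m : ℕ) :
    (m + 1).choose ((m + 1 + 0 + 1) / 2) =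
      m.choose ((m + 0 + 1) / 2) + m.choose ((m + (0 + 1) + 1) / 2) := by
  have hsymm : m.choose (m / 2) = m.choose ((m + 0 + 1) / 2) := by
    rw [← Nat.choose_symm (by omega : m / 2 ≤ m)]
    congr 1
    omega
  rw [show (m + 1 + 0 + 1) / 2 = m / 2 + 1 by omega, Nat.choose_succ_succ', hsymm]

/-- By the reflection principle, `choose m ((m + j + 1) / 2)` walks end in the one point of
`{-j, j + 1}` of the right parity, and survival from `x - 1` means ending in `(-x, x]`. -/
theorem simpleWalkSurvival_eq_sum_choose (m x : ℕ) :
    simpleWalkSurvival m (x - 1) =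
      (∑ j ∈ range x, m.choose ((m + j + 1) / 2) : ℕ) / 2 ^ m := by
  induction m generalizing x with
  | zero =>
    cases x with
    | zero => simp [simpleWalkSurvival]
    | succ x =>
      have hterm (j : ℕ) : Nat.choose 0 ((j + 1 + 1) / 2) = 0 :=
        Nat.choose_eq_zero_of_lt (by omega)
      simp [simpleWalkSurvival, sum_range_succ', hterm]
  | succ m ih =>
    cases x with
    | zero => simp [simpleWalkSurvival]
    | succ x =>
      have hup := ih (x + 2)
      have hdown := ih x
      have hsum : ∑ j ∈ range (x + 1), (m + 1).choose ((m + 1 + j + 1) / 2) =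
          ∑ j ∈ range (x + 2), m.choose ((m + j + 1) / 2) +
            ∑ j ∈ range x, m.choose ((m + j + 1) / 2) := by
        simp only [sum_range_succ' _ x, sum_range_succ' _ (x + 1), choose_succ_half_add,
          choose_succ_half, sum_add_distrib]
        omega
      rw [show ((x + 1 : ℕ) : ℤ) - 1 = x by simp,
        simpleWalkSurvival_succ_of_nonneg m (by positivity), hdown, hsum,
        show (x : ℤ) + 1 = (x + 2 : ℕ) - 1 by push_cast; ring, hup]
      push_cast
      ring

theorem simpleWalkSurvival_zero_right (m : ℕ) :
    simpleWalkSurvival m 0 = ((m + 1) / 2).centralBinom / 4 ^ ((m + 1) / 2) := by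
  have h := simpleWalkSurvival_eq_sum_choose m 1
  rw [Nat.cast_one, sub_self, sum_range_one, add_zero] at h
  rw [h, Nat.centralBinom_eq_two_mul_choose]
  obtain ⟨k, rfl | rfl⟩ := Nat.even_or_odd' m
  · rw [show (2 * k + 1) / 2 = k by omega, pow_mul]
    norm_num
  · have hchoose : (2 * (k + 1)).choose (k + 1) = 2 * (2 * k + 1).choose (k + 1) := by
      rw [mul_add_one, Nat.choose_succ_succ', two_mul ((2 * k + 1).choose _),
        ← Nat.choose_symm_half k]
    rw [show (2 * k + 1 + 1) / 2 = k + 1 by omega, hchoose, pow_succ 2, pow_mul]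
    push_cast
    norm_num
    ring

theorem mul_simpleWalkSurvival_sq_mem_Icc (m : ℕ) :
    π / 2 * m * simpleWalkSurvival m 0 ^ 2 ∈ Set.Icc (m / (m + 2) : ℝ) 1 := by
  rw [simpleWalkSurvival_zero_right]
  obtain ⟨k, hk, hmk, hkm⟩ : ∃ k : ℕ, (m + 1) / 2 = k ∧ m ≤ 2 * k ∧ 2 * k ≤ m + 1 :=
    ⟨_, rfl, by omega, by omega⟩
  rw [hk]
  replace hmk : (m : ℝ) ≤ 2 * k := mod_cast hmk
  replace hkm : (2 * k : ℝ) ≤ m + 1 := mod_cast hkm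
  set h : ℝ := k.centralBinom / 4 ^ k
  constructor
  · rw [div_le_iff₀ (by positivity)]
    calc (m : ℝ) = m * 1 := (mul_one _).symm
      _ ≤ m * (π * (k + 1 / 2) * h ^ 2) := by gcongr; exact one_le_pi_mul_sq_centralBinom_div k
      _ ≤ m * (π * ((m + 2) / 2) * h ^ 2) := by gcongr; linarith
      _ = π / 2 * m * h ^ 2 * (m + 2) := by ring
  · calc π / 2 * m * h ^ 2 ≤ π / 2 * (2 * k) * h ^ 2 := by gcongr
      _ = π * k * h ^ 2 := by ring
      _ ≤ 1 := pi_mul_sq_centralBinom_div_le k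

theorem abs_sqrt_mul_simpleWalkSurvival_sub_one_le {m : ℕ} (hm : m ≠ 0) :
    |√(π / 2 * m) * simpleWalkSurvival m 0 - 1| ≤ 2 / m := by
  obtain ⟨hlower, hupper⟩ := mul_simpleWalkSurvival_sq_mem_Icc m
  have hnonneg := (simpleWalkSurvival_mem_Icc m 0).1
  set t := √(π / 2 * m) * simpleWalkSurvival m 0 with ht
  have ht0 : 0 ≤ t := by positivity
  rw [← sq_sqrt (by positivity : 0 ≤ π / 2 * m), ← mul_pow, ← ht] at hlower hupper
  have ht1 : t ≤ 1 := by nlinarith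
  have hsub : 1 - t ≤ 1 - m / (m + 2) := by nlinarith
  rw [abs_sub_comm, abs_of_nonneg (by linarith)]
  calc 1 - t ≤ 1 - m / (m + 2) := hsub
    _ = 2 / (m + 2) := by field_simp; ring
    _ ≤ 2 / m := by gcongr; linarith

/-- With `N = a X` the left side is `t / √X` for `t = √(π N / 2) * simpleWalkSurvival N 0`, and
`1 - (X - 1) / 2` is the linearisation of `1 / √X` at `X = 1`. -/
theorem abs_sqrt_mul_simpleWalkSurvival_sub_linear_le {a : ℝ} {N : ℕ} (ha : 0 < a)
    (hN : a / 2 ≤ N) :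
    |√(π / 2 * a) * simpleWalkSurvival N 0 - 1 - -(N / a - 1) / 2| ≤
      2 * (N / a - 1) ^ 2 + 8 / a := by
  have hN0 : (0 : ℝ) < N := by linarith
  have hsurvival := abs_sqrt_mul_simpleWalkSurvival_sub_one_le (m := N) (by rintro rfl; simp at hN0)
  have hX : 1 / 2 ≤ (N : ℝ) / a := by rw [le_div_iff₀ ha]; linarith
  obtain ⟨s, hs, hNs⟩ : ∃ s : ℝ, 1 / 2 ≤ s ∧ N / a = s ^ 2 :=
    ⟨√(N / a), le_sqrt_of_sq_le (by linarith), (sq_sqrt (by linarith)).symm⟩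
  have hs0 : 0 < s := by linarith
  set t := √(π / 2 * N) * simpleWalkSurvival N 0 with ht
  have hquot : √(π / 2 * a) * simpleWalkSurvival N 0 = t / s := by
    rw [ht, (div_eq_iff ha.ne').1 hNs, mul_left_comm, sqrt_mul (sq_nonneg s), sqrt_sq hs0.le]
    field_simp
  have hsplit : t / s - 1 - -(s ^ 2 - 1) / 2 =
      (t - 1) / s + (s - 1) ^ 2 * ((s + 2) / (2 * s)) := by
    field_simp
    ring
  have hfluctuation : |(t - 1) / s| ≤ 8 / a := by
    have h4 : (2 : ℝ) / N ≤ 4 / a := by rw [div_le_div_iff₀ hN0 ha]; linarith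
    rw [abs_div, abs_of_pos hs0, div_le_iff₀ hs0]
    calc |t - 1| ≤ 4 / a := hsurvival.trans h4
      _ = 8 / a * (1 / 2) := by ring
      _ ≤ 8 / a * s := by gcongr
  have htaylor : |(s - 1) ^ 2 * ((s + 2) / (2 * s))| ≤ 2 * (s ^ 2 - 1) ^ 2 := by
    rw [abs_of_nonneg (by positivity),
      show 2 * (s ^ 2 - 1) ^ 2 = (s - 1) ^ 2 * (2 * (s + 1) ^ 2) by ring]
    refine mul_le_mul_of_nonneg_left ?_ (sq_nonneg _)
    rw [div_le_iff₀ (by positivity)]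
    nlinarith [mul_nonneg (sub_nonneg.2 hs) (sq_nonneg (s + 1))]
  rw [hquot, hNs, hsplit]
  linarith [abs_add_le ((t - 1) / s) ((s - 1) ^ 2 * ((s + 2) / (2 * s)))]

/-! ### Walks killed on the negative half-line -/

section KilledWalk

variable {α ι : Type*}

/-- `killedExpectation S p e y n x f` is the expectation of `f N` over the event that an `n`-step
walk on `ℤ` started at `x` never becomes negative. A step is drawn from `S` with (possibly
unnormalised) weight `p`; the step `i` moves the walk by `e i` and increases the vector of counters
`N`, which starts at `0`, by `y i`. -/
noncomputable def killedExpectation (S : Finset α) (p : α → ℝ) (e : α → ℤ) (y : α → ι → ℕ) :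
    ℕ → ℤ → ((ι → ℕ) → ℝ) →ₗ[ℝ] ℝ
  | 0, x => if 0 ≤ x then LinearMap.proj 0 else 0
  | n + 1, x => if 0 ≤ x then
      ∑ i ∈ S, p i • killedExpectation S p e y n (x + e i) ∘ₗ LinearMap.funLeft ℝ ℝ (· + y i)
    else 0

variable {S : Finset α} {p : α → ℝ} {e : α → ℤ} {y : α → ι → ℕ} {f g : (ι → ℕ) → ℝ}

theorem killedExpectation_of_neg (n : ℕ) {x : ℤ} (hx : x < 0) :
    killedExpectation S p e y n x = 0 := by
  cases n <;> exact if_neg hx.not_ge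

theorem killedExpectation_zero_of_nonneg {x : ℤ} (hx : 0 ≤ x) :
    killedExpectation S p e y 0 x f = f 0 := by
  simp [killedExpectation, hx]

theorem killedExpectation_succ_of_nonneg (n : ℕ) {x : ℤ} (hx : 0 ≤ x) :
    killedExpectation S p e y (n + 1) x f =
      ∑ i ∈ S, p i * killedExpectation S p e y n (x + e i) (fun N ↦ f (N + y i)) := by
  simp only [killedExpectation, if_pos hx, LinearMap.sum_apply, LinearMap.smul_apply, smul_eq_mul]
  rfl

theorem killedExpectation_mono (hp : ∀ i ∈ S, 0 ≤ p i) (hy : ∀ i ∈ S, ∀ j, y i j ≤ 1) {n : ℕ}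
    (x : ℤ) (hfg : ∀ N : ι → ℕ, (∀ j, N j ≤ n) → f N ≤ g N) :
    killedExpectation S p e y n x f ≤ killedExpectation S p e y n x g := by
  obtain hx | hx := lt_or_ge x 0
  · simp [killedExpectation_of_neg n hx]
  induction n generalizing x f g with
  | zero => simpa only [killedExpectation_zero_of_nonneg hx] using hfg 0 fun _ ↦ le_rfl
  | succ n ih =>
    simp only [killedExpectation_succ_of_nonneg n hx]
    refine sum_le_sum fun i hi ↦ mul_le_mul_of_nonneg_left ?_ (hp i hi)
    obtain hxi | hxi := lt_or_ge (x + e i) 0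
    · simp [killedExpectation_of_neg n hxi]
    · exact ih _ (fun N hN ↦ hfg _ fun j ↦ add_le_add (hN j) (hy i hi j)) hxi

theorem killedExpectation_nonneg (hp : ∀ i ∈ S, 0 ≤ p i) (hy : ∀ i ∈ S, ∀ j, y i j ≤ 1) {n : ℕ}
    (x : ℤ) (hf : ∀ N : ι → ℕ, (∀ j, N j ≤ n) → 0 ≤ f N) :
    0 ≤ killedExpectation S p e y n x f := by
  simpa only [map_zero] using killedExpectation_mono (f := 0) (e := e) hp hy x hf

theorem abs_killedExpectation_le (hp : ∀ i ∈ S, 0 ≤ p i) (hy : ∀ i ∈ S, ∀ j, y i j ≤ 1) {n : ℕ}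
    (x : ℤ) (hfg : ∀ N : ι → ℕ, (∀ j, N j ≤ n) → |f N| ≤ g N) :
    |killedExpectation S p e y n x f| ≤ killedExpectation S p e y n x g := by
  rw [abs_le', ← map_neg]
  exact ⟨killedExpectation_mono hp hy x fun N hN ↦ (le_abs_self _).trans (hfg N hN),
    killedExpectation_mono hp hy x fun N hN ↦ (neg_le_abs _).trans (hfg N hN)⟩

theorem killedExpectation_one_le_one (hp : ∀ i ∈ S, 0 ≤ p i) (hp1 : ∑ i ∈ S, p i = 1) (n : ℕ)
    (x : ℤ) : killedExpectation S p e y n x (fun _ ↦ 1) ≤ 1 := by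
  obtain hx | hx := lt_or_ge x 0
  · simp [killedExpectation_of_neg n hx]
  induction n generalizing x with
  | zero => rw [killedExpectation_zero_of_nonneg hx]
  | succ n ih =>
    rw [killedExpectation_succ_of_nonneg n hx]
    refine (sum_le_sum fun i hi ↦ mul_le_of_le_one_right (hp i hi) ?_).trans_eq hp1
    obtain hxi | hxi := lt_or_ge (x + e i) 0
    · simp [killedExpectation_of_neg n hxi]
    · exact ih _ hxi

theorem one_sub_le_killedExpectation_one {φ : ℤ → ℝ} (hp : ∀ i ∈ S, 0 ≤ p i)
    (hp1 : ∑ i ∈ S, p i = 1) (he : ∀ i ∈ S, -1 ≤ e i) (hφ : ∀ x, 0 ≤ φ x) (hφ1 : 1 ≤ φ (-1))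
    (hsuper : ∀ x, 0 ≤ x → ∑ i ∈ S, p i * φ (x + e i) ≤ φ x) (n : ℕ) {x : ℤ} (hx : -1 ≤ x) :
    1 - φ x ≤ killedExpectation S p e y n x (fun _ ↦ 1) := by
  induction n generalizing x with
  | zero =>
    obtain rfl | hx := hx.eq_or_lt
    · simpa [killedExpectation_of_neg]
    · rw [killedExpectation_zero_of_nonneg (by lia)]
      linarith [hφ x]
  | succ n ih =>
    obtain rfl | hx := hx.eq_or_lt
    · simpa [killedExpectation_of_neg]
    rw [killedExpectation_succ_of_nonneg n (by lia : 0 ≤ x)]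
    calc 1 - φ x ≤ 1 - ∑ i ∈ S, p i * φ (x + e i) := by linarith [hsuper x (by lia)]
      _ = ∑ i ∈ S, p i * (1 - φ (x + e i)) := by simp [mul_sub, hp1]
      _ ≤ ∑ i ∈ S, p i * killedExpectation S p e y n (x + e i) (fun _ ↦ 1) := by
        gcongr with i hi
        · exact hp i hi
        · exact ih (by linarith [he i hi])

theorem abs_killedExpectation_one_sub_one_le {φ : ℤ → ℝ} (hp : ∀ i ∈ S, 0 ≤ p i)
    (hp1 : ∑ i ∈ S, p i = 1) (he : ∀ i ∈ S, -1 ≤ e i) (hφ : ∀ x, 0 ≤ φ x) (hφ1 : 1 ≤ φ (-1))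
    (hsuper : ∀ x, 0 ≤ x → ∑ i ∈ S, p i * φ (x + e i) ≤ φ x) (n : ℕ) {x : ℤ} (hx : -1 ≤ x) :
    |killedExpectation S p e y n x (fun _ ↦ 1) - 1| ≤ φ x := by
  rw [abs_sub_comm, abs_of_nonneg (sub_nonneg.2 (killedExpectation_one_le_one hp hp1 n x))]
  linarith [one_sub_le_killedExpectation_one (y := y) hp hp1 he hφ hφ1 hsuper n hx]

theorem killedExpectation_one_le {φ χ : ℤ → ℝ} {r : ℝ} (hp : ∀ i ∈ S, 0 ≤ p i)
    (hp1 : ∑ i ∈ S, p i = 1) (he : ∀ i ∈ S, -1 ≤ e i) (hφ1 : φ (-1) ≤ 1) (hφχ : ∀ x, φ x ≤ χ x)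
    (hr : 0 ≤ r) (hχ : ∀ x, 0 ≤ χ x) (hsub : ∀ x, 0 ≤ x → φ x ≤ ∑ i ∈ S, p i * φ (x + e i))
    (hχr : ∀ x, 0 ≤ x → ∑ i ∈ S, p i * χ (x + e i) ≤ r * χ x) (n : ℕ) {x : ℤ} (hx : -1 ≤ x) :
    killedExpectation S p e y n x (fun _ ↦ 1) ≤ 1 - φ x + r ^ n * χ x := by
  have hboundary (n : ℕ) : 0 ≤ 1 - φ (-1) + r ^ n * χ (-1) :=
    add_nonneg (sub_nonneg.2 hφ1) (mul_nonneg (pow_nonneg hr n) (hχ _))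
  induction n generalizing x with
  | zero =>
    obtain rfl | hx := hx.eq_or_lt
    · simpa [killedExpectation_of_neg] using hboundary 0
    · rw [killedExpectation_zero_of_nonneg (by lia)]
      linarith [hφχ x]
  | succ n ih =>
    obtain rfl | hx := hx.eq_or_lt
    · simpa [killedExpectation_of_neg] using hboundary (n + 1)
    calc _ = ∑ i ∈ S, p i * killedExpectation S p e y n (x + e i) (fun _ ↦ 1) :=
        killedExpectation_succ_of_nonneg n (by lia)
      _ ≤ ∑ i ∈ S, p i * (1 - φ (x + e i) + r ^ n * χ (x + e i)) := by
        gcongr with i hi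
        · exact hp i hi
        · exact ih (by linarith [he i hi])
      _ = 1 - ∑ i ∈ S, p i * φ (x + e i) + r ^ n * ∑ i ∈ S, p i * χ (x + e i) := by
        simp only [mul_add, mul_sub, sum_add_distrib, sum_sub_distrib, mul_one, hp1, mul_sum,
          mul_left_comm]
      _ ≤ 1 - φ x + r ^ n * (r * χ x) := by gcongr; exacts [hsub x (by lia), hχr x (by lia)]
      _ = 1 - φ x + r ^ (n + 1) * χ x := by ring

theorem killedExpectation_succ_sub_mean (hp1 : ∑ i ∈ S, p i = 1) (n : ℕ) {x : ℤ} (hx : 0 ≤ x)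
    (j : ι) {q : ℝ} (hq : ∑ i ∈ S, p i * y i j = q) :
    killedExpectation S p e y (n + 1) x (fun N ↦ N j - (n + 1 : ℕ) * q) =
      ∑ i ∈ S, p i * killedExpectation S p e y n (x + e i) (fun N ↦ N j - n * q) +
        ∑ i ∈ S, p i * ((y i j - q) *
          (killedExpectation S p e y n (x + e i) (fun _ ↦ 1) - 1)) := by
  have hcentred : ∑ i ∈ S, p i * (y i j - q) = 0 := by
    simp [mul_sub, hq, ← sum_mul, hp1]
  have hshift (i : α) :
      killedExpectation S p e y n (x + e i) (fun N ↦ (N + y i) j - (n + 1 : ℕ) * q) =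
        killedExpectation S p e y n (x + e i) (fun N ↦ N j - n * q) +
          (y i j - q) * killedExpectation S p e y n (x + e i) (fun _ ↦ 1) := by
    rw [← smul_eq_mul (y i j - q : ℝ), ← map_smul, ← map_add]
    congr 1
    ext N
    simp only [Pi.add_apply, Pi.smul_apply, smul_eq_mul]
    push_cast
    ring
  simp only [killedExpectation_succ_of_nonneg n hx, hshift, mul_sub (y _ j - q : ℝ), mul_one,
    mul_add, mul_sub (p _), sum_add_distrib, sum_sub_distrib] at hcentred ⊢
  linarith

/-- Only the surviving mass differs from that of the free walk, and it does so by at most `χ`. -/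
theorem abs_killedExpectation_sub_mean_le {χ : ℤ → ℝ} {r q : ℝ} (hp : ∀ i ∈ S, 0 ≤ p i)
    (hp1 : ∑ i ∈ S, p i = 1) (he : ∀ i ∈ S, -1 ≤ e i) (hy : ∀ i ∈ S, ∀ j, y i j ≤ 1)
    (hχ : ∀ x, 0 ≤ χ x) (hχ1 : 1 ≤ χ (-1)) (hr : 0 ≤ r) (hr1 : r < 1)
    (hχr : ∀ x, 0 ≤ x → ∑ i ∈ S, p i * χ (x + e i) ≤ r * χ x)
    (j : ι) (hq : ∑ i ∈ S, p i * y i j = q) (n : ℕ) {x : ℤ} (hx : -1 ≤ x) :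
    |killedExpectation S p e y n x (fun N ↦ N j - n * q)| ≤ r / (1 - r) * χ x := by
  have hC : 0 ≤ r / (1 - r) := div_nonneg hr (sub_nonneg.2 hr1.le)
  have hyq (i) (hi : i ∈ S) : |y i j - q| ≤ 1 := by
    have hyj (i) (hi : i ∈ S) : (y i j : ℝ) ≤ 1 := mod_cast hy i hi j
    have hq0 : 0 ≤ q := hq ▸ sum_nonneg fun i hi ↦ mul_nonneg (hp i hi) (Nat.cast_nonneg _)
    have hq1 : q ≤ 1 := by
      rw [← hq, ← hp1]
      exact sum_le_sum fun i hi ↦ mul_le_of_le_one_right (hp i hi) (hyj i hi)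
    rw [abs_le]
    constructor <;> linarith [hyj i hi, (y i j).cast_nonneg (α := ℝ)]
  have hsuper (x : ℤ) (hx : 0 ≤ x) : ∑ i ∈ S, p i * χ (x + e i) ≤ χ x :=
    (hχr x hx).trans (mul_le_of_le_one_left (hχ x) hr1.le)
  induction n generalizing x with
  | zero =>
    obtain rfl | hx := hx.eq_or_lt
    · simpa [killedExpectation_of_neg] using mul_nonneg hC (hχ _)
    · simpa [killedExpectation_zero_of_nonneg (by lia : 0 ≤ x)] using mul_nonneg hC (hχ _)
  | succ n ih =>
    obtain rfl | hx := hx.eq_or_lt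
    · simpa [killedExpectation_of_neg] using mul_nonneg hC (hχ _)
    rw [killedExpectation_succ_sub_mean hp1 n (by lia) j hq, ← sum_add_distrib]
    calc _ ≤ ∑ i ∈ S, p i * ((r / (1 - r) + 1) * χ (x + e i)) := by
          refine (abs_sum_le_sum_abs _ _).trans (sum_le_sum fun i hi ↦ ?_)
          have hxi : -1 ≤ x + e i := by linarith [he i hi]
          rw [← mul_add, abs_mul, abs_of_nonneg (hp i hi), add_one_mul]
          refine mul_le_mul_of_nonneg_left ((abs_add_le _ _).trans ?_) (hp i hi)
          refine add_le_add (ih hxi) ?_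
          rw [abs_mul]
          exact (mul_le_of_le_one_left (abs_nonneg _) (hyq i hi)).trans
            (abs_killedExpectation_one_sub_one_le hp hp1 he hχ hχ1 hsuper n hxi)
      _ = (r / (1 - r) + 1) * ∑ i ∈ S, p i * χ (x + e i) := by
          simp only [mul_sum, mul_left_comm]
      _ ≤ (r / (1 - r) + 1) * (r * χ x) := by gcongr; exact hχr x (by lia)
      _ = r / (1 - r) * χ x := by
          have : 1 - r ≠ 0 := (sub_pos.2 hr1).ne'
          field_simp
          ring

theorem killedExpectation_sub_sq_le (hp : ∀ i ∈ S, 0 ≤ p i) (hp1 : ∑ i ∈ S, p i = 1)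
    (hy : ∀ i ∈ S, ∀ j, y i j ≤ 1) (j : ι) {q : ℝ} (hq : ∑ i ∈ S, p i * y i j = q) (n : ℕ)
    (x : ℤ) (c : ℝ) :
    killedExpectation S p e y n x (fun N ↦ (N j - c) ^ 2) ≤ (n * q - c) ^ 2 + n := by
  induction n generalizing x c with
  | zero =>
    obtain hx | hx := lt_or_ge x 0
    · simpa [killedExpectation_of_neg _ hx] using sq_nonneg c
    · simp [killedExpectation_zero_of_nonneg hx]
  | succ n ih =>
    obtain hx | hx := lt_or_ge x 0
    · rw [killedExpectation_of_neg _ hx]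
      exact add_nonneg (sq_nonneg _) (Nat.cast_nonneg _)
    have hsq : ∑ i ∈ S, p i * (y i j : ℝ) ^ 2 ≤ 1 := by
      rw [← hp1]
      refine sum_le_sum fun i hi ↦ mul_le_of_le_one_right (hp i hi) ?_
      exact pow_le_one₀ (Nat.cast_nonneg _) (mod_cast hy i hi j)
    calc _ = ∑ i ∈ S, p i *
            killedExpectation S p e y n (x + e i) (fun N ↦ (N j - (c - y i j)) ^ 2) := by
          rw [killedExpectation_succ_of_nonneg n hx]
          simp [sub_sub_eq_add_sub]
      _ ≤ ∑ i ∈ S, p i * ((n * q - (c - y i j)) ^ 2 + n) := by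
          gcongr with i hi
          exacts [hp i hi, ih _ _]
      _ = ∑ i ∈ S, (((n * q - c) ^ 2 + n) * p i + 2 * (n * q - c) * (p i * y i j) +
            p i * (y i j : ℝ) ^ 2) := by
          congr! 1
          ring
      _ = (n * q - c) ^ 2 + n + 2 * (n * q - c) * q + ∑ i ∈ S, p i * (y i j : ℝ) ^ 2 := by
          rw [sum_add_distrib, sum_add_distrib, ← mul_sum, ← mul_sum, hp1, hq, mul_one]
      _ ≤ ((n + 1 : ℕ) * q - c) ^ 2 + (n + 1 : ℕ) := by
          push_cast
          linarith [sq_nonneg q]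

theorem killedExpectation_pow_le (hp : ∀ i ∈ S, 0 ≤ p i) {t : ℝ} (ht : 0 ≤ t) (j : ι) (n : ℕ)
    (x : ℤ) :
    killedExpectation S p e y n x (fun N ↦ t ^ N j) ≤ (∑ i ∈ S, p i * t ^ y i j) ^ n := by
  induction n generalizing x with
  | zero =>
    obtain hx | hx := lt_or_ge x 0
    · simp [killedExpectation_of_neg _ hx]
    · simp [killedExpectation_zero_of_nonneg hx]
  | succ n ih =>
    have hsum : 0 ≤ ∑ i ∈ S, p i * t ^ y i j :=
      sum_nonneg fun i hi ↦ mul_nonneg (hp i hi) (pow_nonneg ht _)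
    obtain hx | hx := lt_or_ge x 0
    · simpa [killedExpectation_of_neg _ hx] using pow_nonneg hsum _
    have hshift (i : α) : killedExpectation S p e y n (x + e i) (fun N ↦ t ^ (N + y i) j) =
        t ^ y i j * killedExpectation S p e y n (x + e i) (fun N ↦ t ^ N j) := by
      rw [← smul_eq_mul, ← map_smul]
      congr 1
      ext N
      simp [pow_add, mul_comm]
    calc _ = ∑ i ∈ S, p i * t ^ y i j *
            killedExpectation S p e y n (x + e i) (fun N ↦ t ^ N j) := by
          simp only [killedExpectation_succ_of_nonneg n hx, hshift, mul_assoc]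
      _ ≤ ∑ i ∈ S, p i * t ^ y i j * (∑ i ∈ S, p i * t ^ y i j) ^ n := by
          gcongr with i hi
          exacts [mul_nonneg (hp i hi) (pow_nonneg ht _), ih _]
      _ = (∑ i ∈ S, p i * t ^ y i j) ^ (n + 1) := by rw [← sum_mul, pow_succ']

end KilledWalk

/-! ### Asymptotics of the survival factors -/

/-- The conditions under which `killedExpectation S p e y` concerns a random walk with steps in
`{-1, 0, 1}` whose counters increase by at most `1` per step. -/
structure IsCountedStepLaw {α ι : Type*} (S : Finset α) (p : α → ℝ) (e : α → ℤ)
    (y : α → ι → ℕ) : Prop where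
  nonneg : ∀ i ∈ S, 0 ≤ p i
  sum_eq_one : ∑ i ∈ S, p i = 1
  step_mem : ∀ i ∈ S, e i = -1 ∨ e i = 0 ∨ e i = 1
  count_le_one : ∀ i ∈ S, ∀ j, y i j ≤ 1

section Drift

variable {α : Type*} {S : Finset α} {p : α → ℝ} {e : α → ℤ} {A B : ℝ}

theorem sum_mul_comp_of_unit_steps (he : ∀ i ∈ S, e i = -1 ∨ e i = 0 ∨ e i = 1) (g : ℤ → ℝ) :
    ∑ i ∈ S, p i * g (e i) = (∑ i ∈ S, p i) * g 0 +
      (∑ i ∈ S with e i = -1, p i) * (g (-1) - g 0) +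
      (∑ i ∈ S with e i = 1, p i) * (g 1 - g 0) := by
  simp only [sum_mul, sum_filter, ite_mul, zero_mul, ← sum_add_distrib]
  refine sum_congr rfl fun i hi ↦ ?_
  obtain h | h | h := he i hi <;> simp only [h] <;> norm_num <;> ring

theorem sum_mul_pow_toNat (hp1 : ∑ i ∈ S, p i = 1)
    (he : ∀ i ∈ S, e i = -1 ∨ e i = 0 ∨ e i = 1) (hA : ∑ i ∈ S with e i = -1, p i = A)
    (hB : ∑ i ∈ S with e i = 1, p i = B) (t : ℝ) {x : ℤ} (hx : 0 ≤ x) :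
    ∑ i ∈ S, p i * t ^ (x + e i + 1).toNat = (A + (1 - A - B) * t + B * t ^ 2) * t ^ x.toNat := by
  rw [sum_mul_comp_of_unit_steps he fun k ↦ t ^ (x + k + 1).toNat, hp1, hA, hB,
    show (x + 0 + 1).toNat = x.toNat + 1 by lia, show (x + -1 + 1).toNat = x.toNat by lia,
    show (x + 1 + 1).toNat = x.toNat + 2 by lia]
  ring

/-- `θ = √(A / B)` minimises the Laplace transform `A / θ + (1 - A - B) + B θ` of the step, whose
minimum is `r = 1 - B (1 - θ) ^ 2`. -/
theorem exists_laplace_lt_one (hA : 0 ≤ A) (hAB : A < B) (hsum : A + B ≤ 1) :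
    ∃ θ ∈ Set.Icc (0 : ℝ) 1, ∃ r ∈ Set.Ico (0 : ℝ) 1,
      A / B ≤ θ ∧ A + (1 - A - B) * θ + B * θ ^ 2 = r * θ := by
  have hB : 0 < B := hA.trans_lt hAB
  have hρ : A / B < 1 := (div_lt_one hB).2 hAB
  have hρ0 : 0 ≤ A / B := div_nonneg hA hB.le
  have hθ1 : √(A / B) < 1 := (sqrt_lt' one_pos).2 (by simpa using hρ)
  have hθ0 := sqrt_nonneg (A / B)
  have hsq : √(A / B) ^ 2 = A / B := sq_sqrt hρ0
  have hA' : A = B * √(A / B) ^ 2 := by rw [hsq, mul_div_cancel₀ _ hB.ne']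
  refine ⟨√(A / B), ⟨hθ0, hθ1.le⟩, 1 - B * (1 - √(A / B)) ^ 2, ⟨?_, ?_⟩, ?_, ?_⟩
  · nlinarith
  · have : 0 < B * (1 - √(A / B)) ^ 2 := by have := sub_pos.2 hθ1; positivity
    linarith
  · nlinarith
  · linear_combination (1 - √(A / B)) * hA'

end Drift

section CountedStepLaw

variable {α ι : Type*} {S : Finset α} {p : α → ℝ} {e : α → ℤ} {y : α → ι → ℕ} {A B : ℝ}

namespace IsCountedStepLaw

theorem exists_laplace_lt_one (h : IsCountedStepLaw S p e y)
    (hA : ∑ i ∈ S with e i = -1, p i = A) (hB : ∑ i ∈ S with e i = 1, p i = B) (hAB : A < B) :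
    ∃ θ ∈ Set.Icc (0 : ℝ) 1, ∃ r ∈ Set.Ico (0 : ℝ) 1,
      A / B ≤ θ ∧ A + (1 - A - B) * θ + B * θ ^ 2 = r * θ := by
  have hA0 : 0 ≤ A := hA ▸ sum_nonneg fun i hi ↦ h.nonneg i (mem_filter.1 hi).1
  have hsum : A + B ≤ 1 := by
    rw [← hA, ← hB, ← h.sum_eq_one, sum_filter, sum_filter, ← sum_add_distrib]
    refine sum_le_sum fun i hi ↦ ?_
    have := h.nonneg i hi
    obtain h | h | h := h.step_mem i hi <;> simp [h, this]
  exact _root_.exists_laplace_lt_one hA0 hAB hsum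

theorem neg_one_le_step (h : IsCountedStepLaw S p e y) (i : α) (hi : i ∈ S) : -1 ≤ e i := by
  obtain h | h | h := h.step_mem i hi <;> simp [h]

theorem exists_abs_killedExpectation_one_sub_le (h : IsCountedStepLaw S p e y)
    (hA : ∑ i ∈ S with e i = -1, p i = A) (hB : ∑ i ∈ S with e i = 1, p i = B) (hAB : A < B) :
    ∃ r ∈ Set.Ico (0 : ℝ) 1, ∀ n : ℕ,
      |killedExpectation S p e y n 0 (fun _ ↦ 1) - (1 - A / B)| ≤ r ^ n := by
  obtain ⟨θ, ⟨hθ0, hθ1⟩, r, hr, hρθ, hθr⟩ := h.exists_laplace_lt_one hA hB hAB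
  have hA0 : 0 ≤ A := hA ▸ sum_nonneg fun i hi ↦ h.nonneg i (mem_filter.1 hi).1
  have hB0 : 0 < B := hA0.trans_lt hAB
  have hharmonic (x : ℤ) (hx : 0 ≤ x) :
      ∑ i ∈ S, p i * (A / B) ^ (x + e i + 1).toNat = (A / B) ^ (x + 1).toNat := by
    rw [sum_mul_pow_toNat h.sum_eq_one h.step_mem hA hB _ hx,
      show (x + 1).toNat = x.toNat + 1 by lia, pow_succ' _ x.toNat]
    congr 1
    field_simp
    ring
  have hdecay (x : ℤ) (hx : 0 ≤ x) :
      ∑ i ∈ S, p i * θ ^ (x + e i + 1).toNat ≤ r * θ ^ (x + 1).toNat := by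
    rw [sum_mul_pow_toNat h.sum_eq_one h.step_mem hA hB _ hx, hθr,
      show (x + 1).toNat = x.toNat + 1 by lia, pow_succ', mul_assoc]
  refine ⟨r, hr, fun n ↦ abs_sub_le_iff.2 ⟨?_, ?_⟩⟩
  · have hupper := killedExpectation_one_le (y := y) (x := 0) (φ := fun x ↦ (A / B) ^ (x + 1).toNat)
      (χ := fun x ↦ θ ^ (x + 1).toNat) h.nonneg h.sum_eq_one h.neg_one_le_step (by simp)
      (fun x ↦ by gcongr) hr.1 (fun x ↦ by positivity) (fun x hx ↦ (hharmonic x hx).ge) hdecay n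
      (by simp)
    have : r ^ n * θ ≤ r ^ n := mul_le_of_le_one_right (pow_nonneg hr.1 n) hθ1
    simp at hupper
    linarith
  · have hlower := one_sub_le_killedExpectation_one (y := y) (x := 0)
      (φ := fun x ↦ (A / B) ^ (x + 1).toNat) h.nonneg h.sum_eq_one h.neg_one_le_step
      (fun x ↦ by positivity) (by simp) (fun x hx ↦ (hharmonic x hx).le) n (by simp)
    simp at hlower
    linarith [pow_nonneg hr.1 n]

theorem exists_abs_killedExpectation_sub_mean_le (h : IsCountedStepLaw S p e y)
    (hA : ∑ i ∈ S with e i = -1, p i = A) (hB : ∑ i ∈ S with e i = 1, p i = B) (hAB : A < B)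
    {j : ι} {q : ℝ} (hq : ∑ i ∈ S, p i * y i j = q) :
    ∃ C, ∀ n : ℕ, |killedExpectation S p e y n 0 (fun N ↦ N j - n * q)| ≤ C := by
  obtain ⟨θ, ⟨hθ0, -⟩, r, hr, -, hθr⟩ := h.exists_laplace_lt_one hA hB hAB
  refine ⟨_, fun n ↦ abs_killedExpectation_sub_mean_le (χ := fun x ↦ θ ^ (x + 1).toNat) h.nonneg
    h.sum_eq_one h.neg_one_le_step h.count_le_one (fun x ↦ by positivity) (by simp) hr.1 hr.2
    (fun x hx ↦ ?_) j hq n (by simp)⟩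
  rw [sum_mul_pow_toNat h.sum_eq_one h.step_mem hA hB _ hx, hθr,
    show (x + 1).toNat = x.toNat + 1 by lia, pow_succ', mul_assoc]

end IsCountedStepLaw

end CountedStepLaw

section ProductExpansion

variable {X ι : Type*} {F : Filter X} {δ : X → ℝ}

theorem isBigO_prod_sub_one_sub_sum {J : Finset ι} {z l : ι → X → ℝ}
    (hδ : δ =O[F] fun _ ↦ (1 : ℝ)) (hl : ∀ j ∈ J, l j =O[F] δ)
    (hz : ∀ j ∈ J, (fun x ↦ z j x - 1 - l j x) =O[F] fun x ↦ δ x ^ 2) :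
    (fun x ↦ ∏ j ∈ J, z j x - 1 - ∑ j ∈ J, l j x) =O[F] fun x ↦ δ x ^ 2 := by
  classical
  induction J using Finset.induction_on with
  | empty => simpa using isBigO_zero _ _
  | insert j J hj ih =>
    have hlJ (i) (hi : i ∈ J) : l i =O[F] δ := hl i (mem_insert_of_mem hi)
    have hJ := ih hlJ fun i hi ↦ hz i (mem_insert_of_mem hi)
    have hlj := hl j (mem_insert_self j J)
    have hzj := hz j (mem_insert_self j J)
    have hδ2 : (fun x ↦ δ x ^ 2) =O[F] fun _ ↦ (1 : ℝ) := by simpa using hδ.pow 2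
    have hsum : (fun x ↦ ∑ i ∈ J, l i x) =O[F] δ := IsBigO.fun_sum hlJ
    have hone : (fun _ ↦ 1 : X → ℝ) =O[F] fun _ ↦ (1 : ℝ) := isBigO_refl _ _
    have hP : (fun x ↦ ∏ i ∈ J, z i x) =O[F] fun _ ↦ (1 : ℝ) := by
      refine (((hJ.trans hδ2).add hone).add (hsum.trans hδ)).congr_left fun x ↦ ?_
      ring
    have hsplit (x : X) : ∏ i ∈ insert j J, z i x - 1 - ∑ i ∈ insert j J, l i x =
        (z j x - 1 - l j x) * ∏ i ∈ J, z i x +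
          (1 + l j x) * (∏ i ∈ J, z i x - 1 - ∑ i ∈ J, l i x) + l j x * ∑ i ∈ J, l i x := by
      rw [prod_insert hj, sum_insert hj]
      ring
    simp only [hsplit]
    refine .add (.add ?_ ?_) ?_
    · simpa using hzj.mul hP
    · simpa using (hone.add (hlj.trans hδ)).mul hJ
    · simpa [sq] using hlj.mul hsum

end ProductExpansion

section SurvivalExpansion

variable {ι : Type*} {J : Finset ι} {q : ι → ℝ}

theorem abs_div_mul_sub_one_le {q : ℝ} (hq : 0 < q) {n N : ℕ} (hn : 1 ≤ n) (hN : N ≤ n) :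
    |N / (n * q) - 1| ≤ 1 / q + 1 := by
  have hquot : (N : ℝ) / (n * q) ≤ 1 / q := by
    rw [div_le_div_iff₀ (by positivity) hq, one_mul]
    gcongr
  have : 0 ≤ (N : ℝ) / (n * q) := by positivity
  rw [abs_le]
  constructor <;> linarith

/-- The pairs of a time `n ≥ 1` and a vector `N` of numbers of moves, each at most `n` and at
least half of its mean `n * q j`. -/
def typicalCounts (J : Finset ι) (q : ι → ℝ) : Set (ℕ × (ι → ℕ)) :=
  {x | 1 ≤ x.1 ∧ (∀ j, x.2 j ≤ x.1) ∧ ∀ j ∈ J, x.1 * q j / 2 ≤ x.2 j}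

theorem isBigO_prod_survival_of_typicalCounts (hq : ∀ j ∈ J, 0 < q j) :
    (fun x : ℕ × (ι → ℕ) ↦
        ∏ j ∈ J, (√(π / 2 * (x.1 * q j)) * simpleWalkSurvival (x.2 j) 0) - 1 -
          ∑ j ∈ J, -(x.2 j / (x.1 * q j) - 1) / 2) =O[𝓟 (typicalCounts J q)]
      fun x ↦ ∑ j ∈ J, (x.2 j / (x.1 * q j) - 1) ^ 2 + 1 / (x.1 : ℝ) := by
  set ε : ℕ × (ι → ℕ) → ℝ := fun x ↦ ∑ j ∈ J, (x.2 j / (x.1 * q j) - 1) ^ 2 + 1 / (x.1 : ℝ)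
  have hε (x) : 0 ≤ ε x := by positivity
  have hsq_le (j) (hj : j ∈ J) (x : ℕ × (ι → ℕ)) : (x.2 j / (x.1 * q j) - 1) ^ 2 ≤ ε x :=
    (single_le_sum (f := fun j ↦ (x.2 j / (x.1 * q j) - 1 : ℝ) ^ 2) (fun i _ ↦ sq_nonneg _)
      hj).trans (le_add_of_nonneg_right (by positivity))
  have hinv_le (x) : 1 / (x.1 : ℝ) ≤ ε x :=
    le_add_of_nonneg_left (sum_nonneg fun i _ ↦ sq_nonneg _)
  have hlinear (j) (hj : j ∈ J) : (fun x : ℕ × (ι → ℕ) ↦ -(x.2 j / (x.1 * q j) - 1 : ℝ) / 2)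
      =O[𝓟 (typicalCounts J q)] fun x ↦ √(ε x) := by
    refine .of_bound 1 (Eventually.of_forall fun x ↦ ?_)
    have := abs_le_sqrt (hsq_le j hj x)
    rw [norm_eq_abs, norm_eq_abs, abs_div, abs_neg, abs_of_nonneg (sqrt_nonneg _), abs_two]
    linarith [abs_nonneg (x.2 j / (x.1 * q j) - 1 : ℝ)]
  have hbounded : (fun x ↦ √(ε x)) =O[𝓟 (typicalCounts J q)] fun _ ↦ (1 : ℝ) := by
    refine isBigO_principal.2 ⟨√(∑ j ∈ J, (1 / q j + 1) ^ 2 + 1), fun x hx ↦ ?_⟩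
    obtain ⟨hn, hle, -⟩ := hx
    rw [norm_of_nonneg (sqrt_nonneg _), norm_one, mul_one]
    refine sqrt_le_sqrt (add_le_add (sum_le_sum fun j hj ↦ sq_le_sq.2 ?_)
      (div_le_one_of_le₀ (mod_cast hn) (Nat.cast_nonneg _)))
    exact (abs_div_mul_sub_one_le (hq j hj) hn (hle j)).trans (le_abs_self _)
  have hfactor (j) (hj : j ∈ J) :
      (fun x : ℕ × (ι → ℕ) ↦ √(π / 2 * (x.1 * q j)) * simpleWalkSurvival (x.2 j) 0 - 1 -
        -(x.2 j / (x.1 * q j) - 1) / 2) =O[𝓟 (typicalCounts J q)] fun x ↦ √(ε x) ^ 2 := by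
    refine isBigO_principal.2 ⟨2 + 8 / q j, fun x hx ↦ ?_⟩
    have hqj := hq j hj
    have hn : (0 : ℝ) < x.1 := mod_cast hx.1
    rw [sq_sqrt (hε x), norm_eq_abs, norm_eq_abs, abs_of_nonneg (hε x)]
    refine (abs_sqrt_mul_simpleWalkSurvival_sub_linear_le (by positivity) (hx.2.2 j hj)).trans ?_
    rw [add_mul, show 8 / (x.1 * q j) = 8 / q j * (1 / x.1) by field_simp]
    gcongr
    exacts [hsq_le j hj x, hinv_le x]
  simpa only [sq_sqrt (hε _)] using isBigO_prod_sub_one_sub_sum hbounded hlinear hfactor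

theorem isBigO_prod_survival_pow_card (hq : ∀ j ∈ J, 0 < q j) :
    (fun x : ℕ × (ι → ℕ) ↦
        ∏ j ∈ J, (√(π / 2 * (x.1 * q j)) * simpleWalkSurvival (x.2 j) 0) - 1 -
          ∑ j ∈ J, -(x.2 j / (x.1 * q j) - 1) / 2)
      =O[𝓟 {x | 1 ≤ x.1 ∧ ∀ j, x.2 j ≤ x.1}] fun x ↦ (x.1 : ℝ) ^ #J := by
  set F := 𝓟 {x : ℕ × (ι → ℕ) | 1 ≤ x.1 ∧ ∀ j, x.2 j ≤ x.1}
  have hone : (fun _ ↦ 1 : ℕ × (ι → ℕ) → ℝ) =O[F] fun x ↦ (x.1 : ℝ) ^ #J := by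
    refine isBigO_principal.2 ⟨1, fun x hx ↦ ?_⟩
    have : (1 : ℝ) ≤ x.1 := mod_cast hx.1
    simpa using one_le_pow₀ this
  have hfactor (j) (hj : j ∈ J) : (fun x : ℕ × (ι → ℕ) ↦
      √(π / 2 * (x.1 * q j)) * simpleWalkSurvival (x.2 j) 0) =O[F] fun x ↦ (x.1 : ℝ) := by
    refine isBigO_principal.2 ⟨√(π / 2 * q j), fun x hx ↦ ?_⟩
    have hqj := hq j hj
    have hn : (1 : ℝ) ≤ x.1 := mod_cast hx.1
    obtain ⟨h0, h1⟩ := simpleWalkSurvival_mem_Icc (x.2 j) 0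
    rw [norm_of_nonneg (by positivity), norm_of_nonneg (by positivity)]
    calc √(π / 2 * (x.1 * q j)) * simpleWalkSurvival (x.2 j) 0
        ≤ √(π / 2 * (x.1 ^ 2 * q j)) * 1 := by
          gcongr
          exact le_self_pow₀ hn two_ne_zero
      _ = √(π / 2 * q j) * x.1 := by
          rw [mul_one, mul_comm (_ ^ 2), ← mul_assoc, sqrt_mul (by positivity),
            sqrt_sq (Nat.cast_nonneg _)]
  have hcount (j) (hj : j ∈ J) : (fun x : ℕ × (ι → ℕ) ↦ -(x.2 j / (x.1 * q j) - 1 : ℝ) / 2)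
      =O[F] fun _ ↦ (1 : ℝ) := by
    refine isBigO_principal.2 ⟨1 / q j + 1, fun x hx ↦ ?_⟩
    rw [norm_div, norm_neg, norm_one, mul_one, norm_two, norm_eq_abs]
    linarith [abs_div_mul_sub_one_le (hq j hj) hx.1 (hx.2 j),
      abs_nonneg (x.2 j / (x.1 * q j) - 1 : ℝ)]
  have hprod := IsBigO.finsetProd hfactor
  simp only [prod_const] at hprod
  exact (hprod.sub hone).sub ((IsBigO.fun_sum hcount).trans hone)

theorem isBigO_prod_survival_of_atypicalCounts (hq : ∀ j ∈ J, 0 < q j) :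
    (fun x : ℕ × (ι → ℕ) ↦
        ∏ j ∈ J, (√(π / 2 * (x.1 * q j)) * simpleWalkSurvival (x.2 j) 0) - 1 -
          ∑ j ∈ J, -(x.2 j / (x.1 * q j) - 1) / 2)
      =O[𝓟 ({x | 1 ≤ x.1 ∧ ∀ j, x.2 j ≤ x.1} \ typicalCounts J q)]
      fun x ↦ (x.1 : ℝ) ^ #J * ∑ j ∈ J, exp (x.1 * q j / 2 - x.2 j) := by
  refine ((isBigO_prod_survival_pow_card hq).mono (principal_mono.2 Set.sdiff_subset)).trans
    (isBigO_principal.2 ⟨1, fun x hx ↦ ?_⟩)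
  obtain ⟨j, hj, hlt⟩ : ∃ j ∈ J, (x.2 j : ℝ) < x.1 * q j / 2 := by
    by_contra! hge
    exact hx.2 ⟨hx.1.1, hx.1.2, hge⟩
  have hexp : 1 ≤ ∑ j ∈ J, exp (x.1 * q j / 2 - x.2 j) :=
    (one_le_exp (sub_nonneg.2 hlt.le)).trans (single_le_sum (f := fun j ↦
      exp (x.1 * q j / 2 - x.2 j)) (fun i _ ↦ (exp_pos _).le) hj)
  rw [one_mul, norm_mul]
  exact le_mul_of_one_le_right (norm_nonneg _) (hexp.trans (le_abs_self _))

end SurvivalExpansion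

section CountedStepLaw

variable {α ι : Type*} {S : Finset α} {p : α → ℝ} {e : α → ℤ} {y : α → ι → ℕ} {A B : ℝ}
  {J : Finset ι} {q : ι → ℝ}

theorem isBigO_pow_mul_geometric (k : ℕ) {r : ℝ} (hr : r ∈ Set.Ico (0 : ℝ) 1) :
    (fun n : ℕ ↦ (n : ℝ) ^ k * r ^ n) =O[atTop] fun n : ℕ ↦ 1 / (n : ℝ) := by
  have hlim := tendsto_pow_const_mul_const_pow_of_abs_lt_one (k + 1)
    (abs_lt.2 ⟨by linarith [hr.1], hr.2⟩)
  refine ((hlim.isBigO_one ℝ).mul (isBigO_refl (fun n : ℕ ↦ 1 / (n : ℝ)) atTop)).congr' ?_ ?_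
  · filter_upwards [eventually_ne_atTop 0] with n hn
    field_simp
    ring
  · simp

theorem isBigO_prod_survival (hq : ∀ j ∈ J, 0 < q j) :
    (fun x : ℕ × (ι → ℕ) ↦
        ∏ j ∈ J, (√(π / 2 * (x.1 * q j)) * simpleWalkSurvival (x.2 j) 0) - 1 -
          ∑ j ∈ J, -(x.2 j / (x.1 * q j) - 1) / 2)
      =O[𝓟 {x | 1 ≤ x.1 ∧ ∀ j, x.2 j ≤ x.1}]
      fun x ↦ (∑ j ∈ J, (x.2 j / (x.1 * q j) - 1) ^ 2 + 1 / (x.1 : ℝ)) +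
        (x.1 : ℝ) ^ #J * ∑ j ∈ J, exp (x.1 * q j / 2 - x.2 j) := by
  have hε (x : ℕ × (ι → ℕ)) :
      0 ≤ ∑ j ∈ J, (x.2 j / (x.1 * q j) - 1) ^ 2 + 1 / (x.1 : ℝ) := by positivity
  have hη (x : ℕ × (ι → ℕ)) :
      0 ≤ (x.1 : ℝ) ^ #J * ∑ j ∈ J, exp (x.1 * q j / 2 - x.2 j) := by positivity
  refine ((isBigO_prod_survival_of_typicalCounts hq).trans ?_).sup
    ((isBigO_prod_survival_of_atypicalCounts hq).trans ?_) |>.mono ?_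
  · refine .of_norm_le fun x ↦ ?_
    rw [norm_of_nonneg (hε x)]
    exact le_add_of_nonneg_right (hη x)
  · refine .of_norm_le fun x ↦ ?_
    rw [norm_of_nonneg (hη x)]
    exact le_add_of_nonneg_left (hε x)
  · rw [sup_principal, principal_mono]
    exact Set.subset_union_right.trans_eq Set.union_sdiff_self.symm

namespace IsCountedStepLaw

theorem isBigO_killedExpectation (h : IsCountedStepLaw S p e y) {f g : ℕ × (ι → ℕ) → ℝ}
    (hfg : f =O[𝓟 {x | 1 ≤ x.1 ∧ ∀ j, x.2 j ≤ x.1}] g) (hg : ∀ x, 0 ≤ g x) (x : ℤ) :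
    (fun n ↦ killedExpectation S p e y n x fun N ↦ f (n, N)) =O[atTop]
      fun n ↦ killedExpectation S p e y n x fun N ↦ g (n, N) := by
  obtain ⟨C, hC⟩ := isBigO_principal.1 hfg
  refine .of_bound C ?_
  filter_upwards [eventually_ge_atTop 1] with n hn
  calc |killedExpectation S p e y n x fun N ↦ f (n, N)|
      ≤ killedExpectation S p e y n x (C • fun N ↦ g (n, N)) :=
        abs_killedExpectation_le h.nonneg h.count_le_one x fun N hN ↦ by
          simpa [norm_of_nonneg (hg _)] using hC (n, N) ⟨hn, hN⟩
    _ = C * killedExpectation S p e y n x (fun N ↦ g (n, N)) := by rw [map_smul, smul_eq_mul]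
    _ = C * ‖killedExpectation S p e y n x fun N ↦ g (n, N)‖ := by
        rw [norm_of_nonneg]
        exact killedExpectation_nonneg h.nonneg h.count_le_one x fun N _ ↦ hg (n, N)

theorem isBigO_killedExpectation_one_sub (h : IsCountedStepLaw S p e y)
    (hA : ∑ i ∈ S with e i = -1, p i = A) (hB : ∑ i ∈ S with e i = 1, p i = B) (hAB : A < B) :
    (fun n ↦ killedExpectation S p e y n 0 (fun _ ↦ 1) - (1 - A / B)) =O[atTop]
      fun n : ℕ ↦ 1 / (n : ℝ) := by
  obtain ⟨r, hr, hbound⟩ := h.exists_abs_killedExpectation_one_sub_le hA hB hAB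
  refine .trans (.of_norm_le fun n ↦ ?_) (isBigO_pow_mul_geometric 0 hr)
  simpa using hbound n

theorem isBigO_killedExpectation_ratio_sub_one (h : IsCountedStepLaw S p e y)
    (hA : ∑ i ∈ S with e i = -1, p i = A) (hB : ∑ i ∈ S with e i = 1, p i = B) (hAB : A < B)
    {j : ι} {q : ℝ} (hq : ∑ i ∈ S, p i * y i j = q) (hq0 : q ≠ 0) :
    (fun n : ℕ ↦ killedExpectation S p e y n 0 fun N ↦ N j / (n * q) - 1) =O[atTop]
      fun n : ℕ ↦ 1 / (n : ℝ) := by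
  obtain ⟨C, hC⟩ := h.exists_abs_killedExpectation_sub_mean_le hA hB hAB hq
  refine .of_bound (C / |q|) ?_
  filter_upwards [eventually_ne_atTop 0] with n hn
  have hscale : (fun N : ι → ℕ ↦ (N j / (n * q) - 1 : ℝ)) =
      (1 / (n * q)) • fun N : ι → ℕ ↦ (N j - n * q : ℝ) := by
    ext N
    simp only [Pi.smul_apply, smul_eq_mul]
    field_simp
  rw [hscale, map_smul, smul_eq_mul, norm_mul, norm_eq_abs, norm_eq_abs, norm_eq_abs, abs_div,
    abs_mul, abs_div, abs_one]
  calc _ ≤ 1 / (|(n : ℝ)| * |q|) * C := by gcongr; exact hC n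
    _ = C / |q| * (1 / |(n : ℝ)|) := by ring

theorem isBigO_killedExpectation_ratio_sub_one_sq (h : IsCountedStepLaw S p e y)
    {j : ι} {q : ℝ} (hq : ∑ i ∈ S, p i * y i j = q) (hq0 : q ≠ 0) (x : ℤ) :
    (fun n : ℕ ↦ killedExpectation S p e y n x fun N ↦ (N j / (n * q) - 1) ^ 2) =O[atTop]
      fun n : ℕ ↦ 1 / (n : ℝ) := by
  refine .of_bound (1 / q ^ 2) ?_
  filter_upwards [eventually_ne_atTop 0] with n hn
  have hscale : (fun N : ι → ℕ ↦ (N j / (n * q) - 1 : ℝ) ^ 2) =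
      (1 / (n * q) ^ 2) • fun N : ι → ℕ ↦ (N j - n * q : ℝ) ^ 2 := by
    ext N
    simp only [Pi.smul_apply, smul_eq_mul]
    field_simp
  have hnonneg := killedExpectation_nonneg (e := e) (f := fun N ↦ (N j - n * q : ℝ) ^ 2)
    h.nonneg h.count_le_one (n := n) x fun N _ ↦ sq_nonneg _
  have hbound := killedExpectation_sub_sq_le (e := e) h.nonneg h.sum_eq_one h.count_le_one j hq n
    x (n * q)
  rw [sub_self, zero_pow two_ne_zero, zero_add] at hbound
  rw [hscale, map_smul, smul_eq_mul, norm_of_nonneg (by positivity),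
    norm_of_nonneg (by positivity)]
  calc _ ≤ 1 / (n * q) ^ 2 * n := by gcongr
    _ = 1 / q ^ 2 * (1 / n) := by field_simp

/-- The factor `exp (n * q / 2)` is beaten because `1 / 2 < 1 - exp (-1)`. -/
theorem isBigO_pow_mul_killedExpectation_exp (h : IsCountedStepLaw S p e y)
    {j : ι} {q : ℝ} (hq : ∑ i ∈ S, p i * y i j = q) (hq0 : 0 < q) (x : ℤ) (k : ℕ) :
    (fun n : ℕ ↦ (n : ℝ) ^ k * killedExpectation S p e y n x fun N ↦ exp (n * q / 2 - N j))
      =O[atTop] fun n : ℕ ↦ 1 / (n : ℝ) := by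
  have hlaplace : ∑ i ∈ S, p i * exp (-1) ^ y i j ≤ exp (-(q * (1 - exp (-1)))) := by
    have hstep (i) (hi : i ∈ S) : p i * exp (-1) ^ y i j =
        p i - p i * y i j * (1 - exp (-1)) := by
      obtain hyi | hyi := Nat.le_one_iff_eq_zero_or_eq_one.1 (h.count_le_one i hi j) <;>
        simp [hyi, mul_sub]
    rw [sum_congr rfl hstep, sum_sub_distrib, h.sum_eq_one, ← sum_mul, hq]
    linarith [add_one_le_exp (-(q * (1 - exp (-1))))]
  have hrate : exp (-(q * (1 / 2 - exp (-1)))) ∈ Set.Ico (0 : ℝ) 1 := by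
    refine ⟨(exp_pos _).le, exp_lt_one_iff.2 ?_⟩
    have : exp (-1) < 1 / 2 := exp_neg_one_lt_half
    linarith [mul_pos hq0 (sub_pos.2 this)]
  refine .trans (.of_norm_le fun n ↦ ?_) (isBigO_pow_mul_geometric k hrate)
  have hscale : (fun N : ι → ℕ ↦ exp (n * q / 2 - N j)) =
      exp (n * q / 2) • fun N : ι → ℕ ↦ exp (-1) ^ N j := by
    ext N
    simp [← exp_nat_mul, ← exp_add, sub_eq_add_neg]
  have hnonneg := killedExpectation_nonneg (e := e) (f := fun N ↦ exp (-1) ^ N j)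
    h.nonneg h.count_le_one (n := n) x fun N _ ↦ by positivity
  rw [hscale, map_smul, smul_eq_mul, norm_of_nonneg (by positivity)]
  gcongr
  calc exp (n * q / 2) * killedExpectation S p e y n x (fun N ↦ exp (-1) ^ N j)
      ≤ exp (n * q / 2) * exp (-(q * (1 - exp (-1)))) ^ n := by
        gcongr
        refine (killedExpectation_pow_le h.nonneg (exp_pos _).le j n x).trans ?_
        gcongr
        exact sum_nonneg fun i hi ↦ mul_nonneg (h.nonneg i hi) (by positivity)
    _ = exp (-(q * (1 / 2 - exp (-1)))) ^ n := by
        rw [← exp_nat_mul, ← exp_nat_mul, ← exp_add]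
        ring_nf

theorem isBigO_killedExpectation_sq_add_exp (h : IsCountedStepLaw S p e y)
    (hq : ∀ j ∈ J, ∑ i ∈ S, p i * y i j = q j) (hq0 : ∀ j ∈ J, 0 < q j) (k : ℕ) (x : ℤ) :
    (fun n : ℕ ↦ killedExpectation S p e y n x fun N ↦
        (∑ j ∈ J, (N j / (n * q j) - 1) ^ 2 + 1 / (n : ℝ)) +
          (n : ℝ) ^ k * ∑ j ∈ J, exp (n * q j / 2 - N j)) =O[atTop]
      fun n : ℕ ↦ 1 / (n : ℝ) := by
  have hsq : (fun n : ℕ ↦ ∑ j ∈ J,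
      killedExpectation S p e y n x fun N ↦ (N j / (n * q j) - 1) ^ 2) =O[atTop]
      fun n : ℕ ↦ 1 / (n : ℝ) :=
    .fun_sum fun j hj ↦
      h.isBigO_killedExpectation_ratio_sub_one_sq (hq j hj) (hq0 j hj).ne' x
  have hexp : (fun n : ℕ ↦ ∑ j ∈ J, (n : ℝ) ^ k *
      killedExpectation S p e y n x fun N ↦ exp (n * q j / 2 - N j)) =O[atTop]
      fun n : ℕ ↦ 1 / (n : ℝ) :=
    .fun_sum fun j hj ↦ h.isBigO_pow_mul_killedExpectation_exp (hq j hj) (hq0 j hj) x _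
  have hone : (fun n : ℕ ↦ 1 / (n : ℝ) * killedExpectation S p e y n x fun _ ↦ 1) =O[atTop]
      fun n : ℕ ↦ 1 / (n : ℝ) := .of_norm_le fun n ↦ by
    rw [norm_mul, norm_of_nonneg (by positivity : 0 ≤ 1 / (n : ℝ)), norm_of_nonneg
      (killedExpectation_nonneg h.nonneg h.count_le_one x fun _ _ ↦ zero_le_one)]
    exact mul_le_of_le_one_right (by positivity)
      (killedExpectation_one_le_one h.nonneg h.sum_eq_one n x)
  refine ((hsq.add hone).add hexp).congr_left fun n ↦ ?_
  simp only [← smul_eq_mul, ← map_smul, ← map_sum, ← map_add]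
  congr 1
  ext N
  simp [mul_sum]

theorem isBigO_killedExpectation_prod_survival (h : IsCountedStepLaw S p e y)
    (hA : ∑ i ∈ S with e i = -1, p i = A) (hB : ∑ i ∈ S with e i = 1, p i = B) (hAB : A < B)
    (hq : ∀ j ∈ J, ∑ i ∈ S, p i * y i j = q j) (hq0 : ∀ j ∈ J, 0 < q j) :
    (fun n : ℕ ↦ killedExpectation S p e y n 0
        (fun N ↦ ∏ j ∈ J, (√(π / 2 * (n * q j)) * simpleWalkSurvival (N j) 0)) - (1 - A / B))
      =O[atTop] fun n : ℕ ↦ 1 / (n : ℝ) := by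
  have hremainder := (h.isBigO_killedExpectation (isBigO_prod_survival hq0)
    (fun x ↦ by positivity) 0).trans (h.isBigO_killedExpectation_sq_add_exp hq hq0 #J 0)
  have hmean : (fun n : ℕ ↦ ∑ j ∈ J,
      (-1 / 2) * killedExpectation S p e y n 0 fun N ↦ N j / (n * q j) - 1) =O[atTop]
      fun n : ℕ ↦ 1 / (n : ℝ) :=
    .fun_sum fun j hj ↦ .const_mul_left
      (h.isBigO_killedExpectation_ratio_sub_one hA hB hAB (hq j hj) (hq0 j hj).ne') _
  refine ((hremainder.add (h.isBigO_killedExpectation_one_sub hA hB hAB)).add hmean).congr_left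
    fun n ↦ ?_
  rw [← add_sub_assoc, sub_add_eq_add_sub]
  simp only [← smul_eq_mul, ← map_smul, ← map_sum, ← map_add]
  congr 2
  ext N
  simp only [Pi.add_apply, Finset.sum_apply, Pi.smul_apply, smul_eq_mul, neg_div, neg_mul,
    one_div_mul_eq_div]
  ring

end IsCountedStepLaw

end CountedStepLaw

/-! ### Reduction to the drift axis -/

section SymmetricSteps

variable {ι : Type*} [DecidableEq ι] {S : Finset (ι → ℤ)} {w : (ι → ℤ) → ℝ} {j : ι} {J : Finset ι}

/-- The weighted step set `(S, w)` is invariant under the reflection that negates the `j`-th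
coordinate. -/
def IsSymmetricAlong (S : Finset (ι → ℤ)) (w : (ι → ℤ) → ℝ) (j : ι) : Prop :=
  ∀ i ∈ S, Function.update i j (-(i j)) ∈ S ∧ w (Function.update i j (-(i j))) = w i

namespace IsSymmetricAlong

theorem sum_mul_comp_update (h : IsSymmetricAlong S w j) (F : (ι → ℤ) → ℝ) :
    ∑ i ∈ S, w i * F (Function.update i j (-(i j))) = ∑ i ∈ S, w i * F i :=
  sum_nbij' (fun i ↦ Function.update i j (-(i j))) (fun i ↦ Function.update i j (-(i j)))
    (fun i hi ↦ (h i hi).1) (fun i hi ↦ (h i hi).1) (fun i _ ↦ by simp) (fun i _ ↦ by simp)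
    fun i hi ↦ by rw [(h i hi).2]

theorem sum_mul_eq_sum_mul (h : IsSymmetricAlong S w j) {F G : (ι → ℤ) → ℝ}
    (hFG : ∀ i ∈ S, F i + F (Function.update i j (-(i j))) =
      G i + G (Function.update i j (-(i j)))) :
    ∑ i ∈ S, w i * F i = ∑ i ∈ S, w i * G i := by
  have hsum : ∑ i ∈ S, w i * (F i + F (Function.update i j (-(i j)))) =
      ∑ i ∈ S, w i * (G i + G (Function.update i j (-(i j)))) :=
    sum_congr rfl fun i hi ↦ by rw [hFG i hi]
  simp only [mul_add, sum_add_distrib, h.sum_mul_comp_update] at hsum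
  linarith

theorem div_const (h : IsSymmetricAlong S w j) (s : ℝ) : IsSymmetricAlong S (fun i ↦ w i / s) j :=
  fun i hi ↦ ⟨(h i hi).1, by simp only [(h i hi).2]⟩

theorem sum_mul_natAbs (h : IsSymmetricAlong S w j)
    (hS : ∀ i ∈ S, i j = -1 ∨ i j = 0 ∨ i j = 1) :
    ∑ i ∈ S, w i * (i j).natAbs = 2 * ∑ i ∈ S with i j = 1, w i := by
  have hind : 2 * ∑ i ∈ S with i j = 1, w i = ∑ i ∈ S, w i * if i j = 1 then 2 else 0 := by
    rw [sum_filter, mul_sum]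
    exact sum_congr rfl fun i _ ↦ by split_ifs <;> ring
  rw [hind]
  refine h.sum_mul_eq_sum_mul fun i hi ↦ ?_
  rcases hS i hi with hij | hij | hij <;> norm_num [hij]

end IsSymmetricAlong

theorem sum_mul_map_prod_eq_symmetrized {R : Type*} [CommRing R] [Algebra ℝ R]
    (hsym : ∀ j ∈ J, IsSymmetricAlong S w j) {c : (ι → ℤ) → R →ₗ[ℝ] ℝ}
    (hc : ∀ j ∈ J, ∀ i, c (Function.update i j (-(i j))) = c i) (g : ι → ℤ → R) :
    ∑ i ∈ S, w i * c i (∏ j ∈ J, g j (i j)) =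
      ∑ i ∈ S, w i * c i (∏ j ∈ J, (1 / 2 : ℝ) • (g j (i j) + g j (-(i j)))) := by
  induction J using Finset.induction_on generalizing c with
  | empty => rfl
  | insert a J ha ih =>
    rw [forall_mem_insert] at hsym hc
    set σ : (ι → ℤ) → R := fun i ↦ (1 / 2 : ℝ) • (g a (i a) + g a (-(i a)))
    calc ∑ i ∈ S, w i * c i (∏ j ∈ insert a J, g j (i j))
        = ∑ i ∈ S, w i * (c i ∘ₗ LinearMap.mulLeft ℝ (σ i)) (∏ j ∈ J, g j (i j)) := by
          refine hsym.1.sum_mul_eq_sum_mul fun i _ ↦ ?_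
          have hJ : ∏ j ∈ J, g j (Function.update i a (-(i a)) j) = ∏ j ∈ J, g j (i j) :=
            prod_congr rfl fun j hj ↦ by
              rw [Function.update_of_ne (ne_of_mem_of_not_mem hj ha)]
          simp only [LinearMap.comp_apply, LinearMap.mulLeft_apply, prod_insert ha, hJ, hc.1, σ,
            Function.update_self, neg_neg, ← map_add, ← add_mul]
          congr 2
          module
      _ = _ := by
          rw [ih hsym.2]
          · simp [prod_insert ha, σ]
          · intro j hj i
            simp [hc.2 j hj, σ, Function.update_of_ne (ne_of_mem_of_not_mem hj ha).symm]

end SymmetricSteps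

section WalkCount

variable {ι : Type*} [Fintype ι]

/-- The weighted number of `n`-step walks in the orthant `ι → ℕ` that start at `x`; as for
`weightedWalkCount`, the starting point itself is not required to lie in the orthant. -/
noncomputable def walkCountFrom (S : Finset (ι → ℤ)) (w : (ι → ℤ) → ℝ) (x : ι → ℤ) (n : ℕ) : ℝ :=
  ∑ u : Fin n → S,
    if ∀ k m, 0 ≤ x m + ∑ j ∈ Iic k, (u j : ι → ℤ) m then ∏ k, w (u k) else 0

theorem weightedWalkCount_mul_zpow_neg (d : ℕ) (S : Finset (Fin d → ℤ)) (w : (Fin d → ℤ) → ℝ)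
    (s : ℝ) (n : ℕ) :
    weightedWalkCount d S w n * s ^ (-(n : ℤ)) = walkCountFrom S (fun i ↦ w i / s) 0 n := by
  simp only [weightedWalkCount, walkCountFrom, sum_mul, ite_mul, zero_mul, Pi.zero_apply, zero_add,
    prod_div_distrib, prod_const, card_univ, Fintype.card_fin]
  simp only [zpow_neg, zpow_natCast, div_eq_mul_inv]

theorem sum_Iic_succ_cons {M : Type*} [AddCommMonoid M] {n : ℕ} (a : M) (v : Fin n → M)
    (k : Fin n) :
    ∑ j ∈ Iic k.succ, (Fin.cons a v : Fin (n + 1) → M) j = a + ∑ j ∈ Iic k, v j := by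
  have hIic : Iic k.succ = insert 0 ((Iic k).map (Fin.succEmb n)) := by
    rw [Fin.map_succEmb_Iic, Ioc_insert_left (Fin.zero_le _), ← bot_eq_zero, Icc_bot]
  rw [hIic, sum_insert (by simp), sum_map]
  simp only [Fin.cons_zero, Fin.coe_succEmb, Fin.cons_succ]

variable {S : Finset (ι → ℤ)} {w : (ι → ℤ) → ℝ} {x : ι → ℤ}

theorem walkCountFrom_zero : walkCountFrom S w x 0 = 1 := by
  simp [walkCountFrom]

theorem walkCountFrom_succ (n : ℕ) :
    walkCountFrom S w x (n + 1) =
      ∑ i ∈ S, if ∀ m, 0 ≤ x m + i m then w i * walkCountFrom S w (x + i) n else 0 := by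
  have hconfined (i : S) (u : Fin n → S) :
      (∀ k m, 0 ≤ x m + ∑ j ∈ Iic k, ((Fin.cons i u : Fin (n + 1) → S) j : ι → ℤ) m) ↔
        (∀ m, 0 ≤ x m + (i : ι → ℤ) m) ∧
          ∀ k m, 0 ≤ (x + i) m + ∑ j ∈ Iic k, (u j : ι → ℤ) m := by
    have hpath (m : ι) : (fun j ↦ ((Fin.cons i u : Fin (n + 1) → S) j : ι → ℤ) m) =
        Fin.cons ((i : ι → ℤ) m) fun j ↦ (u j : ι → ℤ) m :=
      funext fun j ↦ by cases j using Fin.cases <;> rfl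
    have hIic : Iic (0 : Fin (n + 1)) = {0} := by rw [← bot_eq_zero, Iic_bot]
    simp only [hpath, Fin.forall_fin_succ, sum_Iic_succ_cons, hIic, sum_singleton, Fin.cons_zero,
      Pi.add_apply, add_assoc]
  rw [walkCountFrom, ← (Fin.consEquiv fun _ ↦ S).sum_comp, Fintype.sum_prod_type, ← sum_coe_sort S]
  refine sum_congr rfl fun i _ ↦ ?_
  simp only [Fin.consEquiv, Equiv.coe_fn_mk, hconfined, Fin.prod_univ_succ, Fin.cons_zero,
    Fin.cons_succ, ite_and, walkCountFrom, mul_sum, mul_ite, mul_zero]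
  split_ifs <;> simp

variable [DecidableEq ι]

/-- By symmetry, the coordinates off the axis `ℓ` perform independent simple random walks once the
moves along `ℓ` and the numbers of moves along the other axes are given. -/
theorem walkCountFrom_eq_killedExpectation (hS : ∀ i ∈ S, ∀ m, i m = -1 ∨ i m = 0 ∨ i m = 1)
    (ℓ : ι) (hsym : ∀ j ≠ ℓ, IsSymmetricAlong S w j) (n : ℕ) (hx : ∀ m, 0 ≤ x m) :
    walkCountFrom S w x n = killedExpectation S w (· ℓ) (fun i j ↦ (i j).natAbs) n (x ℓ)
      fun N ↦ ∏ j ∈ univ.erase ℓ, simpleWalkSurvival (N j) (x j) := by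
  induction n generalizing x with
  | zero =>
    rw [walkCountFrom_zero, killedExpectation_zero_of_nonneg (hx ℓ)]
    exact (prod_eq_one fun j _ ↦ simpleWalkSurvival_zero_of_nonneg (hx j)).symm
  | succ n ih =>
    have hstep (i : ι → ℤ) : (if ∀ m, 0 ≤ x m + i m then w i * walkCountFrom S w (x + i) n else 0) =
        w i * killedExpectation S w (· ℓ) (fun i j ↦ (i j).natAbs) n (x ℓ + i ℓ)
          (∏ j ∈ univ.erase ℓ, fun N ↦ simpleWalkSurvival (N j) (x j + i j)) := by
      split_ifs with hxi
      · rw [ih (x := x + i) hxi, prod_fn]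
        rfl
      · push Not at hxi
        obtain ⟨m, hm⟩ := hxi
        obtain rfl | hmℓ := eq_or_ne m ℓ
        · simp [killedExpectation_of_neg n hm]
        · rw [prod_eq_zero (mem_erase.2 ⟨hmℓ, mem_univ m⟩)
            (funext fun N ↦ simpleWalkSurvival_of_neg _ hm), map_zero, mul_zero]
    rw [walkCountFrom_succ, killedExpectation_succ_of_nonneg n (hx ℓ),
      sum_congr rfl fun i _ ↦ hstep i,
      sum_mul_map_prod_eq_symmetrized (fun j hj ↦ hsym j (ne_of_mem_erase hj))
        (c := fun i ↦ killedExpectation S w (· ℓ) (fun i j ↦ (i j).natAbs) n (x ℓ + i ℓ))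
        (fun j hj i ↦ by rw [Function.update_of_ne (ne_of_mem_erase hj).symm])
        fun j a N ↦ simpleWalkSurvival (N j) (x j + a)]
    refine sum_congr rfl fun i hi ↦ ?_
    congr 2
    ext N
    rw [prod_apply]
    refine prod_congr rfl fun j _ ↦ ?_
    rw [Pi.add_apply, simpleWalkSurvival_add_natAbs (N j) (hx j) (hS i hi j)]
    simp [sub_eq_add_neg, div_eq_inv_mul]

end WalkCount

theorem isCountedStepLaw_div_sum {ι : Type*} {S : Finset (ι → ℤ)} {w : (ι → ℤ) → ℝ}
    (hS : ∀ i ∈ S, ∀ m, i m = -1 ∨ i m = 0 ∨ i m = 1) (hw : ∀ i ∈ S, 0 ≤ w i)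
    (hsum : 0 < ∑ i ∈ S, w i) (ℓ : ι) :
    IsCountedStepLaw S (fun i ↦ w i / ∑ i ∈ S, w i) (· ℓ) fun i j ↦ (i j).natAbs where
  nonneg i hi := div_nonneg (hw i hi) hsum.le
  sum_eq_one := by rw [← sum_div, div_self hsum.ne']
  step_mem i hi := hS i hi ℓ
  count_le_one i hi j := by rcases hS i hi j with h | h | h <;> simp [h]

theorem rpow_card_div_two_eq {ι : Type*} {J : Finset ι} {b : ι → ℝ} {s a : ℝ}
    (hb : ∀ j ∈ J, 0 < b j) (hs : 0 < s) (ha : 0 ≤ a) :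
    a ^ (#J / 2 : ℝ) = (s / π) ^ (#J / 2 : ℝ) * (∏ j ∈ J, b j) ^ (-(1 : ℝ) / 2) *
      ∏ j ∈ J, √(π / 2 * (a * (2 * b j / s))) := by
  have hpow {t : ℝ} (ht : 0 ≤ t) : t ^ (#J / 2 : ℝ) = ∏ _j ∈ J, √t := by
    rw [prod_const, sqrt_eq_rpow, ← rpow_natCast, ← rpow_mul ht, one_div_mul_eq_div]
  rw [hpow ha, hpow (by positivity), ← Real.finsetProd_rpow J b (fun j hj ↦ (hb j hj).le),
    ← prod_mul_distrib, ← prod_mul_distrib]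
  refine prod_congr rfl fun j hj ↦ ?_
  have hbj := hb j hj
  rw [neg_div, rpow_neg hbj.le, ← sqrt_eq_rpow, ← sqrt_inv, ← sqrt_mul (by positivity),
    ← sqrt_mul (by positivity)]
  congr 1
  field_simp

theorem weightedWalkCount_mul_rpow_eq {d : ℕ} {ℓ : Fin d} {S : Finset (Fin d → ℤ)}
    {w : (Fin d → ℤ) → ℝ} {b : Fin d → ℝ} {s : ℝ} (hS : ∀ i ∈ S, ∀ m, i m = -1 ∨ i m = 0 ∨ i m = 1)
    (hsym : ∀ j ≠ ℓ, IsSymmetricAlong S w j) (hb : ∀ j ≠ ℓ, 0 < b j) (hs : 0 < s) (n : ℕ) :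
    weightedWalkCount d S w n * s ^ (-(n : ℤ)) * (n : ℝ) ^ (((d : ℝ) - 1) / 2) =
      (s / π) ^ (((d : ℝ) - 1) / 2) * (∏ j ∈ univ.erase ℓ, b j) ^ (-(1 : ℝ) / 2) *
        killedExpectation S (fun i ↦ w i / s) (· ℓ) (fun i j ↦ (i j).natAbs) n 0 fun N ↦
          ∏ j ∈ univ.erase ℓ, (√(π / 2 * (n * (2 * b j / s))) * simpleWalkSurvival (N j) 0) := by
  have hcard : (d : ℝ) - 1 = #(univ.erase ℓ) := by
    rw [cast_card_erase_of_mem (mem_univ ℓ), card_univ, Fintype.card_fin]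
  rw [weightedWalkCount_mul_zpow_neg, walkCountFrom_eq_killedExpectation hS ℓ
    (fun j hj ↦ (hsym j hj).div_const s) n (x := 0) fun _ ↦ le_rfl, hcard,
    rpow_card_div_two_eq (fun j hj ↦ hb j (ne_of_mem_erase hj)) hs n.cast_nonneg]
  rw [mul_comm, mul_assoc, ← smul_eq_mul (∏ j ∈ _, √_), ← map_smul]
  simp only [prod_mul_distrib]
  rfl

theorem filter_val_lt_pred_eq_erase {d : ℕ} (hd : d - 1 < d) :
    (univ.filter fun j : Fin d ↦ (j : ℕ) < d - 1) = univ.erase ⟨d - 1, hd⟩ := by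
  ext j
  simp only [mem_filter, mem_univ, true_and, mem_erase, and_true, ne_eq, Fin.ext_iff]
  lia

theorem positive_drift_asymptotics_general {d : ℕ} (ℓ : Fin d) {S : Finset (Fin d → ℤ)}
    {w : (Fin d → ℤ) → ℝ} {A B s : ℝ} (hS : ∀ i ∈ S, ∀ m, i m = -1 ∨ i m = 0 ∨ i m = 1)
    (hw : ∀ i ∈ S, 0 ≤ w i) (hsym : ∀ j ≠ ℓ, IsSymmetricAlong S w j)
    (hpos : ∀ j ≠ ℓ, ∃ i ∈ S, i j = 1 ∧ 0 < w i)
    (hA : A = ∑ i ∈ S with i ℓ = -1, w i) (hB : B = ∑ i ∈ S with i ℓ = 1, w i)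
    (hs : s = ∑ i ∈ S, w i) (hAB : A < B) :
    ∃ c : ℝ, 0 < c ∧ ∀ n : ℕ, 1 ≤ n →
      |weightedWalkCount d S w n * s ^ (-(n : ℤ)) * (n : ℝ) ^ (((d : ℝ) - 1) / 2) -
        (1 - A / B) * (s / π) ^ (((d : ℝ) - 1) / 2) *
          (∏ j ∈ univ.erase ℓ, ∑ i ∈ S with i j = 1, w i) ^ (-(1 : ℝ) / 2)| ≤ c / n := by
  have hA0 : 0 ≤ A := hA ▸ sum_nonneg fun i hi ↦ hw i (mem_of_mem_filter i hi)
  have hs0 : 0 < s := (hA0.trans_lt hAB).trans_le <| by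
    rw [hB, hs]
    exact sum_le_sum_of_subset_of_nonneg (filter_subset _ _) fun i hi _ ↦ hw i hi
  have hb0 (j) (hj : j ≠ ℓ) : 0 < ∑ i ∈ S with i j = 1, w i := by
    obtain ⟨i, hi, hij, hwi⟩ := hpos j hj
    exact sum_pos' (fun i hi ↦ hw i (mem_of_mem_filter i hi)) ⟨i, mem_filter.2 ⟨hi, hij⟩, hwi⟩
  have hlaw : IsCountedStepLaw S (fun i ↦ w i / s) (· ℓ) fun i j ↦ (i j).natAbs :=
    hs ▸ isCountedStepLaw_div_sum hS hw (hs ▸ hs0) ℓ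
  have hmean (j) (hj : j ∈ univ.erase ℓ) : ∑ i ∈ S, w i / s * (i j).natAbs =
      2 * (∑ i ∈ S with i j = 1, w i) / s := by
    simp only [div_mul_eq_mul_div]
    rw [← sum_div, (hsym j (ne_of_mem_erase hj)).sum_mul_natAbs fun i hi ↦ hS i hi j]
  have hmain := hlaw.isBigO_killedExpectation_prod_survival (A := A / s) (B := B / s)
    (by rw [← sum_div, hA]) (by rw [← sum_div, hB]) (by gcongr) hmean fun j hj ↦
      div_pos (mul_pos two_pos (hb0 j (ne_of_mem_erase hj))) hs0
  obtain ⟨c, hc, hbound⟩ := bound_of_isBigO_nat_atTop <|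
    hmain.const_mul_left ((s / π) ^ (((d : ℝ) - 1) / 2) *
      (∏ j ∈ univ.erase ℓ, ∑ i ∈ S with i j = 1, w i) ^ (-(1 : ℝ) / 2))
  refine ⟨c, hc, fun n hn ↦ ?_⟩
  rw [weightedWalkCount_mul_rpow_eq hS hsym hb0 hs0, mul_assoc (1 - A / B),
    mul_comm (1 - A / B), ← mul_sub, ← div_div_div_cancel_right₀ hs0.ne' A B]
  simpa [div_eq_mul_inv c] using hbound (one_div_ne_zero (by positivity : (n : ℝ) ≠ 0))

theorem positive_drift_asymptotics
    (d : ℕ) (hd : 2 ≤ d)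
    (S : Finset (Fin d → ℤ)) (w : (Fin d → ℤ) → ℝ)
    -- steps lie in {-1,0,1}^d \ {0}
    (hSsmall : ∀ i ∈ S, (∀ m : Fin d, i m = -1 ∨ i m = 0 ∨ i m = 1) ∧ i ≠ 0)
    -- nonnegative weights
    (hw : ∀ i ∈ S, 0 ≤ w i)
    -- symmetry of the weighting over each of the first d-1 axes
    (hsym : ∀ j : Fin d, (j : ℕ) < d - 1 → ∀ i ∈ S,
      Function.update i j (-(i j)) ∈ S ∧ w (Function.update i j (-(i j))) = w i)
    -- a positively weighted step forwards and backwards in each coordinate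
    (hfb : ∀ j : Fin d, (∃ i ∈ S, i j = 1 ∧ 0 < w i) ∧ (∃ i ∈ S, i j = -1 ∧ 0 < w i))
    (A1 B1 S1 : ℝ)
    (hA1 : A1 = ∑ i ∈ S.filter (fun i => i ⟨d - 1, by omega⟩ = -1), w i)
    (hB1 : B1 = ∑ i ∈ S.filter (fun i => i ⟨d - 1, by omega⟩ = 1), w i)
    (hS1 : S1 = ∑ i ∈ S, w i)
    -- positive drift
    (hdrift : A1 < B1) :
    ∃ c : ℝ, 0 < c ∧ ∀ n : ℕ, 1 ≤ n →
      |weightedWalkCount d S w n * S1 ^ (-(n : ℤ)) * (n : ℝ) ^ (((d : ℝ) - 1) / 2)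
        - (1 - A1 / B1) * (S1 / Real.pi) ^ (((d : ℝ) - 1) / 2)
            * (∏ j ∈ Finset.univ.filter (fun j : Fin d => (j : ℕ) < d - 1),
                ∑ i ∈ S.filter (fun i => i j = 1), w i) ^ (-(1 : ℝ) / 2)|
      ≤ c / n := by
  rw [filter_val_lt_pred_eq_erase (by lia)]
  exact positive_drift_asymptotics_general _ (fun i hi ↦ (hSsmall i hi).1) hw
    (fun j hj ↦ hsym j (by grind)) (fun j _ ↦ (hfb j).1) hA1 hB1 hS1 hdrift
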